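/- Let f : ℝ² → ℝ² be continuous on a compact set Ω with connected interior, nonvanishing on ∂Ω, with deg(f, Ω, 0) = 0. Then there exists a continuous function g : Ω → ℝ² such that g = f on ∂Ω and g has no zero in Ω. -/

import Mathlib

/-!
Identify `ℝ × ℝ` with `ℂ` and fix a point `a` in the interior of `Ω`. On `∂Ω` the map `f` can be
written as `f z = G z * (z - a) ^ n`, with `n` an integer and `G` continuous and nonvanishing on all
of `Ω` (`normalForm_of_ne_zero`). The degree axioms give `deg f Ω = n` (`deg_normalForm`), so if
the degree is zero then `G` itself is the required extension.

For the normal form, approximate `f` by a smooth map having `0` as a regular value (Sard); closeness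
on `∂Ω` only costs a factor `exp h`, and `h` extends to the plane by Tietze. The approximating map
has finitely many zeros `b` in `Ω`, and each can be divided out, leaving factors `z - b` or
`conj (z - b)` according to orientation (`exists_divided`). On `∂Ω`, `conj (z - b)` is `(z - b)⁻¹`
times the exponential of a real function, and as the interior is connected, `z - b` equals `z - a`
times an exponential (`normalForm_sub`).

For the degree, homotopy invariance and excision reduce to a small disk around `a`, on which `G` is
homotopic to `1`; the degrees of `(z - a) ^ k` and `conj (z - a) ^ k` are found by moving roots
apart (`deg_model_pow`), and `deg_conj` deduces `deg conj = -1` from `conj z * z ≥ 0`.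
-/

/-- An abstract Brouwer degree theory for continuous maps `ℝ² → ℝ²` on compact
sets, satisfying the classical axioms: normalization, additivity of domain,
and homotopy invariance (for homotopies nonvanishing on the boundary). -/
structure BrouwerDegreeTheory where
  /-- `deg f Ω` is the topological degree of `f` on `Ω` with respect to `0`. -/
  deg : ((ℝ × ℝ) → (ℝ × ℝ)) → Set (ℝ × ℝ) → ℤ
  /-- Normalization: translations of the identity have degree one when the
  target point lies in the interior. -/
  normalization : ∀ (Ω : Set (ℝ × ℝ)) (y : ℝ × ℝ), IsCompact Ω →
    y ∈ interior Ω → deg (fun x => x - y) Ω = 1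
  /-- Additivity/excision: if `f` does not vanish on `Ω` outside the interiors
  of two compact subsets with disjoint interiors, the degree splits. -/
  additivity : ∀ (f : (ℝ × ℝ) → (ℝ × ℝ)) (Ω Ω₁ Ω₂ : Set (ℝ × ℝ)),
    Continuous f → IsCompact Ω → IsCompact Ω₁ → IsCompact Ω₂ →
    Ω₁ ⊆ Ω → Ω₂ ⊆ Ω → Disjoint (interior Ω₁) (interior Ω₂) →
    (∀ x ∈ Ω \ (interior Ω₁ ∪ interior Ω₂), f x ≠ 0) →
    deg f Ω = deg f Ω₁ + deg f Ω₂
  /-- Homotopy invariance: a homotopy avoiding `0` on the boundary preserves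
  the degree. -/
  homotopy_invariance : ∀ (H : ℝ → (ℝ × ℝ) → (ℝ × ℝ)) (Ω : Set (ℝ × ℝ)),
    IsCompact Ω → Continuous (fun q : ℝ × (ℝ × ℝ) => H q.1 q.2) →
    (∀ s ∈ Set.Icc (0 : ℝ) 1, ∀ x ∈ frontier Ω, H s x ≠ 0) →
    deg (H 0) Ω = deg (H 1) Ω
namespace DegreeZero

/-! ### The normal form on the frontier -/

/-- The Tietze extension theorem, phrased for total functions `ℂ → ℂ`. -/
theorem exists_continuous_eqOn {s : Set ℂ} (hs : IsClosed s) {h : ℂ → ℂ} (hh : ContinuousOn h s) :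
    ∃ g : ℂ → ℂ, Continuous g ∧ Set.EqOn g h s := by
  obtain ⟨g, hg⟩ := ContinuousMap.exists_restrict_eq hs
    (⟨s.domRestrict h, continuousOn_iff_continuous_domRestrict.mp hh⟩ : C(s, ℂ))
  refine ⟨g, g.continuous, fun x hx => ?_⟩
  exact congr($hg ⟨x, hx⟩)

/-- `f` agrees on `∂Ω` with `G z * (z - a) ^ n`, where `n` is an integer and `G` is continuous and
has no zero in `Ω`. It depends only on the values of `f` on `∂Ω`; `G` is taken continuous on all of
`ℂ` because the degree axioms concern globally continuous maps. -/
def NormalForm (Ω : Set ℂ) (a : ℂ) (f : ℂ → ℂ) : Prop :=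
  ∃ n : ℤ, ∃ G : ℂ → ℂ, Continuous G ∧ (∀ z ∈ Ω, G z ≠ 0) ∧
    ∀ z ∈ frontier Ω, f z = G z * (z - a) ^ n

section
variable {Ω : Set ℂ} {a : ℂ} {f g : ℂ → ℂ}

theorem sub_ne_zero_of_mem_frontier {b : ℂ} (hb : b ∈ interior Ω) {z : ℂ} (hz : z ∈ frontier Ω) :
    z - b ≠ 0 := by
  intro h
  rw [sub_eq_zero] at h
  subst h
  exact hz.2 hb

theorem NormalForm.congr (hf : NormalForm Ω a f) (h : ∀ z ∈ frontier Ω, g z = f z) : NormalForm Ω a g := by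
  obtain ⟨n, G, hG, h0, hn⟩ := hf
  exact ⟨n, G, hG, h0, fun z hz => (h z hz).trans (hn z hz)⟩

theorem NormalForm.of_continuous (hf : Continuous f) (h0 : ∀ z ∈ Ω, f z ≠ 0) : NormalForm Ω a f :=
  ⟨0, f, hf, h0, by simp⟩

theorem NormalForm.mul (ha : a ∈ interior Ω) (hf : NormalForm Ω a f) (hg : NormalForm Ω a g) :
    NormalForm Ω a (fun z => f z * g z) := by
  obtain ⟨n, G, hG, hG0, hn⟩ := hf
  obtain ⟨m, H, hH, hH0, hm⟩ := hg
  refine ⟨n + m, fun z => G z * H z, hG.mul hH, fun z hz => mul_ne_zero (hG0 z hz) (hH0 z hz),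
    fun z hz => ?_⟩
  change f z * g z = G z * H z * _
  rw [hn z hz, hm z hz, zpow_add₀ (sub_ne_zero_of_mem_frontier ha hz)]
  ring

theorem NormalForm.of_exp {h : ℂ → ℂ} (hh : ContinuousOn h (frontier Ω))
    (hf : ∀ z ∈ frontier Ω, f z = Complex.exp (h z)) : NormalForm Ω a f := by
  obtain ⟨k, hk, hkh⟩ := exists_continuous_eqOn isClosed_frontier hh
  refine (NormalForm.of_continuous (f := fun z => Complex.exp (k z)) (by fun_prop)
    (fun z _ => Complex.exp_ne_zero _)).congr fun z hz => ?_
  rw [hf z hz, hkh hz]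

theorem NormalForm.inv (hΩ : IsClosed Ω) (hf : NormalForm Ω a f) : NormalForm Ω a (fun z => (f z)⁻¹) := by
  obtain ⟨n, G, hG, hG0, hn⟩ := hf
  obtain ⟨k, hk, hkG⟩ := exists_continuous_eqOn hΩ (hG.continuousOn.inv₀ hG0)
  refine ⟨-n, k, hk, fun z hz => ?_, fun z hz => ?_⟩
  · rw [hkG hz]; exact inv_ne_zero (hG0 z hz)
  · change (f z)⁻¹ = _
    rw [hn z hz, hkG (hΩ.frontier_subset hz), mul_inv, zpow_neg]; rfl

/-- A map that is relatively close on `∂Ω` to one in normal form differs from it there by a factor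
with values in the slit plane, that is, by the exponential of a continuous function. -/
theorem NormalForm.of_near (ha : a ∈ interior Ω) (hg : NormalForm Ω a g)
    (hfc : ContinuousOn f (frontier Ω)) (hgc : ContinuousOn g (frontier Ω))
    (hfg : ∀ z ∈ frontier Ω, ‖f z - g z‖ < ‖g z‖) : NormalForm Ω a f := by
  have hg0 : ∀ z ∈ frontier Ω, g z ≠ 0 := fun z hz h => by
    have := hfg z hz
    rw [h, norm_zero] at this
    exact absurd this (norm_nonneg _).not_gt
  have hslit : ∀ z ∈ frontier Ω, f z / g z ∈ Complex.slitPlane := fun z hz => by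
    have : f z / g z = 1 + (f z - g z) / g z := by field_simp [hg0 z hz]; ring
    rw [this]
    apply Complex.mem_slitPlane_of_norm_lt_one
    rw [norm_div, div_lt_one (norm_pos_iff.mpr (hg0 z hz))]
    exact hfg z hz
  have hN : NormalForm Ω a (fun z => f z / g z) :=
    NormalForm.of_exp (h := fun z => Complex.log (f z / g z))
      ((hfc.div hgc hg0).clog hslit)
      (fun z hz => (Complex.exp_log (Complex.slitPlane_ne_zero (hslit z hz))).symm)
  refine (hg.mul ha hN).congr fun z hz => ?_
  field_simp [hg0 z hz]

/-- For `b` in the connected interior, moving `b` a little changes `z - b` on `∂Ω` by a relatively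
small amount, so `b` may be moved along to `a`. -/
theorem normalForm_sub (hconn : IsPreconnected (interior Ω)) (ha : a ∈ interior Ω) {b : ℂ}
    (hb : b ∈ interior Ω) : NormalForm Ω a (fun z => z - b) := by
  have key := hconn.induction₂ (fun x y => NormalForm Ω a (fun z => z - x) ↔ NormalForm Ω a (fun z => z - y))
    (fun x hx => ?_) (fun x y z _ _ _ h1 h2 => h1.trans h2) (fun x y _ _ h => h.symm) ha hb
  · refine key.mp ⟨1, fun _ => 1, continuous_const, by simp, by simp⟩
  · obtain ⟨ε, hε, hball⟩ := Metric.isOpen_iff.mp isOpen_interior x hx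
    filter_upwards [mem_nhdsWithin_of_mem_nhds (Metric.ball_mem_nhds x (half_pos hε))] with y hy
    rw [Metric.mem_ball, dist_eq_norm] at hy
    have hfar : ∀ z ∈ frontier Ω, ε ≤ ‖z - x‖ := fun z hz => by
      by_contra! h
      exact hz.2 (hball (by rwa [Metric.mem_ball, dist_eq_norm]))
    have hc : ∀ x : ℂ, ContinuousOn (fun z => z - x) (frontier Ω) := fun x => by fun_prop
    constructor
    · intro h
      refine h.of_near ha (hc y) (hc x) fun z hz => ?_
      have := hfar z hz
      rw [show z - y - (z - x) = -(y - x) by ring, norm_neg]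
      linarith
    · intro h
      refine h.of_near ha (hc x) (hc y) fun z hz => ?_
      have h1 := hfar z hz
      have h2 : ‖z - x‖ ≤ ‖z - y‖ + ‖y - x‖ := by
        rw [show z - x = (z - y) + (y - x) by ring]; exact norm_add_le _ _
      rw [show z - x - (z - y) = y - x by ring]
      linarith

theorem normalForm_sub' (hΩ : IsClosed Ω) (hconn : IsPreconnected (interior Ω)) (ha : a ∈ interior Ω)
    {b : ℂ} (hb : b ∉ frontier Ω) : NormalForm Ω a (fun z => z - b) := by
  by_cases h : b ∈ interior Ω
  · exact normalForm_sub hconn ha h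
  · refine NormalForm.of_continuous (by fun_prop) fun z hz hzb => hb ?_
    rw [hΩ.frontier_eq]
    exact ⟨(sub_eq_zero.mp hzb) ▸ hz, h⟩

/-- The two model maps near a nondegenerate zero: the identity (orientation preserving) and complex
conjugation (orientation reversing). -/
def IsModel (q : ℂ → ℂ) : Prop := q = (fun w => w) ∨ q = (fun w => (starRingEnd ℂ) w)

theorem IsModel.norm {q : ℂ → ℂ} (hq : IsModel q) (w : ℂ) : ‖q w‖ = ‖w‖ := by
  rcases hq with rfl | rfl <;> simp

theorem IsModel.continuous {q : ℂ → ℂ} (hq : IsModel q) : Continuous q := by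
  rcases hq with rfl | rfl
  · exact continuous_id
  · exact Complex.continuous_conj

theorem IsModel.eq_zero {q : ℂ → ℂ} (hq : IsModel q) {w : ℂ} : q w = 0 ↔ w = 0 := by
  rw [← norm_eq_zero, hq.norm, norm_eq_zero]

/-- For conjugation, `conj w = w⁻¹ * ‖w‖ ^ 2`, and the positive factor is an exponential. -/
theorem IsModel.normalForm {q : ℂ → ℂ} (hq : IsModel q)
    (hΩ : IsClosed Ω) (hconn : IsPreconnected (interior Ω)) (ha : a ∈ interior Ω)
    {b : ℂ} (hb : b ∉ frontier Ω) : NormalForm Ω a (fun z => q (z - b)) := by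
  have h1 := normalForm_sub' hΩ hconn ha hb
  rcases hq with rfl | rfl
  · exact h1
  · have hne : ∀ z ∈ frontier Ω, z - b ≠ 0 := fun z hz h => hb (sub_eq_zero.mp h ▸ hz)
    have h2 : NormalForm Ω a (fun z => ((‖z - b‖ ^ 2 : ℝ) : ℂ)) := by
      refine NormalForm.of_exp (h := fun z => ((Real.log (‖z - b‖ ^ 2) : ℝ) : ℂ)) ?_ fun z hz => ?_
      · refine Complex.continuous_ofReal.comp_continuousOn (ContinuousOn.log (by fun_prop) ?_)
        intro z hz
        have := norm_pos_iff.mpr (hne z hz)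
        positivity
      · rw [← Complex.ofReal_exp, Real.exp_log]
        have := norm_pos_iff.mpr (hne z hz)
        positivity
    refine ((h1.inv hΩ).mul ha h2).congr fun z hz => ?_
    have h3 := Complex.mul_conj' (z - b)
    have h4 := hne z hz
    push_cast
    rw [← h3]
    field_simp
end

/-! ### Nondegenerate zeros -/

open Filter Topology

/-- Near `b`, the map `F` is dominated by `γ * q (z - b)` for a model map `q` and some `γ ≠ 0`, with
relative error at most `κ < 1`. In particular `F b = 0`, and `b` is an isolated zero of `F`. -/
def Tame (F : ℂ → ℂ) (b : ℂ) : Prop :=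
  ∃ q : ℂ → ℂ, IsModel q ∧ ∃ γ : ℂ, γ ≠ 0 ∧ ∃ κ : ℝ, 0 ≤ κ ∧ κ < 1 ∧
    ∀ᶠ z in 𝓝 b, ‖F z - γ * q (z - b)‖ ≤ κ * ‖γ‖ * ‖z - b‖

theorem Tame.congr {F G : ℂ → ℂ} {b : ℂ} (hF : Tame F b) (h : ∀ᶠ z in 𝓝 b, G z = F z) :
    Tame G b := by
  obtain ⟨q, hq, γ, hγ, κ, hκ0, hκ1, hb⟩ := hF
  refine ⟨q, hq, γ, hγ, κ, hκ0, hκ1, ?_⟩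
  filter_upwards [hb, h] with z h1 h2
  rwa [h2]

theorem Tame.mul {F u : ℂ → ℂ} {b : ℂ} (hF : Tame F b) (hu : ContinuousAt u b) (hub : u b ≠ 0) :
    Tame (fun z => F z * u z) b := by
  obtain ⟨q, hq, γ, hγ, κ, hκ0, hκ1, hb⟩ := hF
  refine ⟨q, hq, γ * u b, mul_ne_zero hγ hub, (κ + 1) / 2, by linarith, by linarith, ?_⟩
  have hub' := norm_pos_iff.mpr hub
  have hlim : Tendsto (fun z => ‖u z‖ * κ + ‖u z - u b‖) (𝓝 b) (𝓝 (‖u b‖ * κ + ‖u b - u b‖)) :=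
    ((hu.norm.mul_const κ).add ((hu.sub continuousAt_const).norm))
  have hev : ∀ᶠ z in 𝓝 b, ‖u z‖ * κ + ‖u z - u b‖ < ‖u b‖ * ((κ + 1) / 2) := by
    refine hlim.eventually_lt_const ?_
    rw [sub_self, norm_zero, add_zero]
    exact mul_lt_mul_of_pos_left (by linarith) hub'
  filter_upwards [hb, hev] with z h1 h2
  calc ‖F z * u z - γ * u b * q (z - b)‖
      = ‖u z * (F z - γ * q (z - b)) + γ * q (z - b) * (u z - u b)‖ := by ring_nf
    _ ≤ ‖u z‖ * (κ * ‖γ‖ * ‖z - b‖) + ‖γ‖ * ‖z - b‖ * ‖u z - u b‖ := by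
        refine (norm_add_le _ _).trans ?_
        rw [norm_mul, norm_mul, norm_mul, hq.norm]
        gcongr
    _ = (‖u z‖ * κ + ‖u z - u b‖) * (‖γ‖ * ‖z - b‖) := by ring
    _ ≤ (‖u b‖ * ((κ + 1) / 2)) * (‖γ‖ * ‖z - b‖) := by gcongr
    _ = (κ + 1) / 2 * ‖γ * u b‖ * ‖z - b‖ := by rw [norm_mul]; ring

theorem ne_zero_of_bound {F q : ℂ → ℂ} (hq : IsModel q) {γ : ℂ} (hγ : γ ≠ 0) {κ : ℝ} (hκ : κ < 1)
    {z b : ℂ} (hzb : z ≠ b) (h : ‖F z - γ * q (z - b)‖ ≤ κ * ‖γ‖ * ‖z - b‖) : F z ≠ 0 := by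
  intro h0
  have h1 : 0 < ‖z - b‖ := norm_pos_iff.mpr (sub_ne_zero.mpr hzb)
  have h2 : 0 < ‖γ‖ := norm_pos_iff.mpr hγ
  rw [h0, zero_sub, norm_neg, norm_mul, hq.norm] at h
  nlinarith [mul_pos h2 h1]

theorem Tame.eventually_ne {F : ℂ → ℂ} {b : ℂ} (hF : Tame F b) : ∀ᶠ z in 𝓝[≠] b, F z ≠ 0 := by
  obtain ⟨q, hq, γ, hγ, κ, hκ0, hκ1, hb⟩ := hF
  filter_upwards [hb.filter_mono nhdsWithin_le_nhds, self_mem_nhdsWithin] with z h1 h2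
  exact ne_zero_of_bound hq hγ hκ1 h2 h1

/-- A zero with injective real derivative is tame. Writing `L w = α * w + β * conj w`, injectivity
forces `‖α‖ ≠ ‖β‖`, and the larger coefficient gives the dominating term. -/
theorem Tame.of_hasFDerivAt {F : ℂ → ℂ} {b : ℂ} {L : ℂ →L[ℝ] ℂ} (hF : HasFDerivAt F L b)
    (h0 : F b = 0) (hL : ∀ w, L w = 0 → w = 0) : Tame F b := by
  set α : ℂ := (L 1 - Complex.I * L Complex.I) / 2 with hα
  set β : ℂ := (L 1 + Complex.I * L Complex.I) / 2 with hβ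
  have hLw : ∀ w : ℂ, L w = α * w + β * (starRingEnd ℂ) w := fun w => by
    have h1 : L w = w.re * L 1 + w.im * L Complex.I := by
      conv_lhs => rw [show w = w.re • (1 : ℂ) + w.im • Complex.I by simp]
      rw [map_add, map_smul, map_smul]
      simp
    have h2 : (starRingEnd ℂ) w = w.re - w.im * Complex.I := by
      apply Complex.ext <;> simp
    rw [h2, h1]
    conv_rhs => rw [← Complex.re_add_im w]
    simp only [hα, hβ, Complex.add_re, Complex.add_im, Complex.mul_re, Complex.mul_im,
      Complex.ofReal_re, Complex.ofReal_im, Complex.I_re, Complex.I_im]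
    push_cast
    ring_nf
    simp only [Complex.I_sq]
    ring
  have hne : ‖α‖ ≠ ‖β‖ := by
    intro h
    have hsq : α * (starRingEnd ℂ) α = β * (starRingEnd ℂ) β := by
      rw [Complex.mul_conj', Complex.mul_conj', h]
    -- the kernel of `L` contains `conj α * k - β * conj k` for every `k`
    have hk : ∀ k : ℂ, (starRingEnd ℂ) α * k - β * (starRingEnd ℂ) k = 0 := fun k => by
      apply hL
      rw [hLw]
      simp only [map_sub, map_mul, Complex.conj_conj]
      linear_combination k * hsq
    have k1 := hk 1
    have kI := hk Complex.I
    simp only [map_one, Complex.conj_I, mul_one] at k1 kI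
    have hI : (starRingEnd ℂ) α + β = 0 := by
      have : ((starRingEnd ℂ) α + β) * Complex.I = 0 := by linear_combination kI
      exact (mul_eq_zero.mp this).resolve_right Complex.I_ne_zero
    have hβ0 : β = 0 := by linear_combination (hI - k1) / 2
    have hα0 : α = 0 := by
      rw [← norm_eq_zero, h, hβ0, norm_zero]
    exact one_ne_zero (hL 1 (by rw [hLw, hα0, hβ0]; simp))
  have main : ∀ (q q' : ℂ → ℂ) (γ γ' : ℂ), IsModel q → IsModel q' → ‖γ'‖ < ‖γ‖ →
      (∀ w, L w = γ * q w + γ' * q' w) → Tame F b := by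
    intro q q' γ γ' hq hq' hlt hsplit
    have hγ : 0 < ‖γ‖ := (norm_nonneg _).trans_lt hlt
    refine ⟨q, hq, γ, norm_pos_iff.mp hγ, (‖γ'‖ / ‖γ‖ + 1) / 2, by positivity, ?_, ?_⟩
    · have := (div_lt_one hγ).mpr hlt
      linarith
    · have ho := hasFDerivAt_iff_isLittleO.mp hF
      filter_upwards [ho.def (show 0 < (‖γ‖ - ‖γ'‖) / 2 by linarith)] with z hz
      rw [h0, sub_zero] at hz
      calc ‖F z - γ * q (z - b)‖
          = ‖(F z - L (z - b)) + γ' * q' (z - b)‖ := by rw [hsplit]; ring_nf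
        _ ≤ (‖γ‖ - ‖γ'‖) / 2 * ‖z - b‖ + ‖γ'‖ * ‖z - b‖ := by
            refine (norm_add_le _ _).trans ?_
            rw [norm_mul, hq'.norm]
            gcongr
        _ = (‖γ'‖ / ‖γ‖ + 1) / 2 * ‖γ‖ * ‖z - b‖ := by field_simp; ring
  rcases lt_or_gt_of_ne hne with h | h
  · exact main _ _ β α (Or.inr rfl) (Or.inl rfl) h fun w => by rw [hLw]; ring
  · exact main _ _ α β (Or.inl rfl) (Or.inr rfl) h hLw

/-- Sard's theorem: after smoothing `f`, a small translation makes `0` a regular value. -/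
theorem exists_tame_approx {f : ℂ → ℂ} (hf : Continuous f) {ε : ℝ} (hε : 0 < ε) :
    ∃ F : ℂ → ℂ, Continuous F ∧ (∀ z, ‖F z - f z‖ < ε) ∧ ∀ z, F z = 0 → Tame F z := by
  obtain ⟨F, hF, hFf, -⟩ := hf.exists_contDiff_approx (E := ℂ) (F := ℂ) 1
    (ε := fun _ => ε / 2) continuous_const (fun _ => half_pos hε)
  have hd : Differentiable ℝ F := hF.differentiable (by simp)
  have hnull : MeasureTheory.volume (F '' {z | (fderiv ℝ F z).det = 0}) = 0 :=
    MeasureTheory.addHaar_image_eq_zero_of_det_fderivWithin_eq_zero MeasureTheory.volume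
      (f' := fun z => fderiv ℝ F z)
      (fun z _ => (hd z).hasFDerivAt.hasFDerivWithinAt) (fun z hz => hz)
  obtain ⟨c, hc, hcε⟩ : ∃ c ∉ F '' {z | (fderiv ℝ F z).det = 0}, ‖c‖ < ε / 2 := by
    by_contra! h
    have hsub : Metric.ball (0 : ℂ) (ε / 2) ⊆ F '' {z | (fderiv ℝ F z).det = 0} := fun c hc => by
      by_contra hc'
      exact absurd (mem_ball_zero_iff.mp hc) (h c hc').not_gt
    exact (Metric.measure_ball_pos MeasureTheory.volume (0 : ℂ) (half_pos hε)).ne'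
      (MeasureTheory.measure_mono_null hsub hnull)
  refine ⟨fun z => F z - c, hF.continuous.sub continuous_const, fun z => ?_, fun z hz => ?_⟩
  · have := hFf z
    rw [dist_eq_norm] at this
    calc ‖F z - c - f z‖ = ‖(F z - f z) - c‖ := by ring_nf
      _ ≤ ‖F z - f z‖ + ‖c‖ := norm_sub_le _ _
      _ < ε := by linarith
  · have hdet : (fderiv ℝ F z).det ≠ 0 := fun h => hc ⟨z, h, sub_eq_zero.mp hz⟩
    refine Tame.of_hasFDerivAt ((hd z).hasFDerivAt.sub_const c) hz fun w hw => ?_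
    exact (LinearEquiv.ofIsUnitDet (f := (fderiv ℝ F z : ℂ →ₗ[ℝ] ℂ))
      (v := Complex.basisOneI) (v' := Complex.basisOneI)
      (by rw [LinearMap.det_toMatrix]; exact isUnit_iff_ne_zero.mpr hdet)).map_eq_zero_iff.mp hw

section
variable {Ω : Set ℂ} {a : ℂ}

/-- A tame zero `b` can be divided out: there is a continuous `φ` equal to `F z / q (z - b)` off a
small disk around `b`. Inside the disk that quotient stays within `κ * ‖γ‖` of `γ`, so interpolating
radially between `γ` at the centre and the quotient on the circle creates no zeros. -/
theorem exists_divided {F : ℂ → ℂ} (hF : Continuous F) {b : ℂ} (hb : Tame F b)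
    {A : Set ℂ} (hA : IsClosed A) (hbA : b ∉ A) :
    ∃ (φ q : ℂ → ℂ), IsModel q ∧ Continuous φ ∧ (∀ z ∈ A, F z = φ z * q (z - b)) ∧
      ∀ z, φ z = 0 → z ≠ b ∧ F z = 0 ∧ (Tame F z → Tame φ z) := by
  obtain ⟨q, hq, γ, hγ, κ, hκ0, hκ1, hb⟩ := hb
  obtain ⟨δ, hδ, hball⟩ := Metric.nhds_basis_closedBall.mem_iff.mp
    (inter_mem hb (hA.isOpen_compl.mem_nhds hbA))
  have hγ' := norm_pos_iff.mpr hγ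
  set φ : ℂ → ℂ := fun z => γ + ((min 1 (‖z - b‖ / δ) : ℝ) : ℂ) * (F z / q (z - b) - γ) with hφ
  have hout : ∀ z, δ ≤ ‖z - b‖ → φ z = F z / q (z - b) := fun z hz => by
    simp only [hφ]
    rw [min_eq_left ((one_le_div hδ).mpr hz)]
    simp
  have hq0 : ∀ z, z ≠ b → q (z - b) ≠ 0 := fun z hz h => hz (sub_eq_zero.mp (hq.eq_zero.mp h))
  have hin : ∀ z, ‖z - b‖ ≤ δ → ‖φ z - γ‖ ≤ ‖z - b‖ / δ * (κ * ‖γ‖) := fun z hz => by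
    rcases eq_or_ne z b with rfl | hzb
    · simp [hφ]
    have h1 : ‖F z - γ * q (z - b)‖ ≤ κ * ‖γ‖ * ‖z - b‖ :=
      (hball (mem_closedBall_iff_norm.mpr hz)).1
    have h2 : 0 < ‖z - b‖ := norm_pos_iff.mpr (sub_ne_zero.mpr hzb)
    have h3 : F z / q (z - b) - γ = (F z - γ * q (z - b)) / q (z - b) := by
      field_simp [hq0 z hzb]
    simp only [hφ, add_sub_cancel_left]
    rw [min_eq_right ((div_le_one hδ).mpr hz), h3, norm_mul, norm_div, hq.norm,
      Complex.norm_of_nonneg (by positivity)]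
    gcongr
    rwa [div_le_iff₀ h2]
  have hnear : ∀ z, ‖z - b‖ ≤ δ → φ z ≠ 0 := fun z hz h => by
    have h1 := hin z hz
    rw [h, zero_sub, norm_neg] at h1
    have h2 : ‖z - b‖ / δ ≤ 1 := (div_le_one hδ).mpr hz
    have h3 : ‖z - b‖ / δ * (κ * ‖γ‖) ≤ 1 * (κ * ‖γ‖) := by gcongr
    nlinarith
  have hφc : Continuous φ := by
    rw [continuous_iff_continuousAt]
    intro z
    rcases eq_or_ne z b with rfl | hzb
    · have hφz : φ z = γ := by simp [hφ]
      rw [ContinuousAt, hφz, tendsto_iff_norm_sub_tendsto_zero]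
      have hlim : Tendsto (fun w : ℂ => ‖w - z‖ / δ * (κ * ‖γ‖)) (𝓝 z) (𝓝 0) := by
        have : Continuous (fun w : ℂ => ‖w - z‖ / δ * (κ * ‖γ‖)) := by fun_prop
        simpa using this.tendsto z
      refine squeeze_zero' (Eventually.of_forall fun _ => norm_nonneg _) ?_ hlim
      filter_upwards [Metric.closedBall_mem_nhds z hδ] with w hw
      exact hin w (mem_closedBall_iff_norm.mp hw)
    · have hqc : ContinuousAt (fun z => q (z - b)) z :=
        (hq.continuous.comp (continuous_id.sub continuous_const)).continuousAt
      have hm : Continuous (fun z : ℂ => ((min 1 (‖z - b‖ / δ) : ℝ) : ℂ)) := by fun_prop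
      exact continuousAt_const.add
        (hm.continuousAt.mul ((hF.continuousAt.div hqc (hq0 z hzb)).sub continuousAt_const))
  refine ⟨φ, q, hq, hφc, fun z hz => ?_, fun z hz => ?_⟩
  · have hz' : δ ≤ ‖z - b‖ := by
      by_contra! h
      exact (hball (mem_closedBall_iff_norm.mpr h.le)).2 hz
    have hzb : z ≠ b := fun h => hbA (h ▸ hz)
    rw [hout z hz', div_mul_cancel₀ _ (hq0 z hzb)]
  · have hz' : δ < ‖z - b‖ := by
      by_contra! h
      exact hnear z h hz
    have hzb : z ≠ b := fun h => by
      rw [h, sub_self, norm_zero] at hz'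
      exact hz'.not_gt hδ
    refine ⟨hzb, ?_, fun ht => ?_⟩
    · rw [hout z hz'.le, div_eq_zero_iff] at hz
      exact hz.resolve_right (hq0 z hzb)
    · have hqc : Continuous (fun z => q (z - b)) :=
        hq.continuous.comp (continuous_id.sub continuous_const)
      refine (ht.mul (u := fun z => (q (z - b))⁻¹) (hqc.continuousAt.inv₀ (hq0 z hzb))
        (inv_ne_zero (hq0 z hzb))).congr ?_
      have : ∀ᶠ w in 𝓝 z, δ < ‖w - b‖ :=
        (continuous_id.sub continuous_const).norm.continuousAt.eventually_const_lt hz'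
      filter_upwards [this] with w hw
      rw [hout w hw.le, div_eq_mul_inv]

/-- Induction on the finite set of zeros in `Ω`, dividing out one zero at a time. -/
theorem normalForm_of_tame (hΩ : IsClosed Ω) (hconn : IsPreconnected (interior Ω))
    (ha : a ∈ interior Ω) (S : Finset ℂ) : ∀ F : ℂ → ℂ, Continuous F →
    (∀ z ∈ Ω, F z = 0 → z ∈ S) → (∀ z ∈ Ω, F z = 0 → Tame F z) →
    (∀ z ∈ frontier Ω, F z ≠ 0) → NormalForm Ω a F := by
  classical
  induction S using Finset.induction_on with
  | empty =>
    intro F hF hS _ _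
    exact NormalForm.of_continuous hF fun z hz h => by simpa using hS z hz h
  | insert b S hbS ih =>
    intro F hF hS ht hfr
    by_cases hb : b ∈ Ω ∧ F b = 0
    · have hbfr : b ∉ frontier Ω := fun h => hfr b h hb.2
      obtain ⟨φ, q, hq, hφ, hFφ, hzero⟩ :=
        exists_divided hF (ht b hb.1 hb.2) isClosed_frontier hbfr
      refine ((ih φ hφ (fun z hz h => ?_) (fun z hz h => ?_) fun z hz h => ?_).mul ha
        (hq.normalForm hΩ hconn ha hbfr)).congr hFφ
      · exact (Finset.mem_insert.mp (hS z hz (hzero z h).2.1)).resolve_left (hzero z h).1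
      · exact (hzero z h).2.2 (ht z hz (hzero z h).2.1)
      · exact hfr z hz (hzero z h).2.1
    · refine ih F hF (fun z hz h => ?_) ht hfr
      refine (Finset.mem_insert.mp (hS z hz h)).resolve_left ?_
      rintro rfl
      exact hb ⟨hz, h⟩

/-- Every continuous map without zeros on `∂Ω` has a normal form there: it is close to a map with
only tame zeros, which are isolated and hence finitely many in the compact set `Ω`. -/
theorem normalForm_of_ne_zero (hΩ : IsCompact Ω) (hconn : IsPreconnected (interior Ω))
    (ha : a ∈ interior Ω) {f : ℂ → ℂ} (hf : Continuous f) (h0 : ∀ z ∈ frontier Ω, f z ≠ 0) :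
    NormalForm Ω a f := by
  have hfr : IsCompact (frontier Ω) := hΩ.of_isClosed_subset isClosed_frontier
    hΩ.isClosed.frontier_subset
  obtain ⟨m, hm, hmf⟩ : ∃ m : ℝ, 0 < m ∧ ∀ z ∈ frontier Ω, m ≤ ‖f z‖ :=
    hfr.exists_forall_le' (f := fun z => ‖f z‖) hf.norm.continuousOn
      (fun z hz => norm_pos_iff.mpr (h0 z hz))
  obtain ⟨F, hF, hFf, ht⟩ := exists_tame_approx hf (half_pos hm)
  have hF' : ∀ z ∈ frontier Ω, ‖f z - F z‖ < ‖F z‖ := fun z hz => by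
    have h1 := hFf z
    have h2 := hmf z hz
    have h3 := norm_sub_norm_le (f z) (F z)
    rw [norm_sub_rev] at h1
    linarith
  have hfin : {z ∈ Ω | F z = 0}.Finite := by
    by_contra hinf
    obtain ⟨x, hx, hacc⟩ := Set.Infinite.exists_accPt_of_subset_isCompact hinf hΩ fun z hz => hz.1
    have hFx : F x = 0 := by
      have hcl : IsClosed {z | F z = 0} := isClosed_eq hF continuous_const
      exact hcl.closure_subset_iff.mpr (fun z hz => hz.2) hacc.clusterPt.mem_closure
    rw [accPt_iff_frequently_nhdsNE] at hacc
    exact hacc ((ht x hFx).eventually_ne.mono fun z hz h => hz h.2)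
  refine (normalForm_of_tame hΩ.isClosed hconn ha hfin.toFinset F hF (fun z hz h => ?_)
    (fun z _ h => ht z h) fun z hz h => ?_).of_near ha hf.continuousOn hF.continuousOn hF'
  · simpa using ⟨hz, h⟩
  · have := hF' z hz
    rw [h, norm_zero] at this
    exact absurd this (norm_nonneg _).not_gt
end

/-! ### Degree computations from the axioms -/

/-- The axioms of `BrouwerDegreeTheory`, transported to maps `ℂ → ℂ` and subsets of `ℂ`, so that
complex multiplication and powers are available in degree computations. -/
structure PlaneDegree where
  /-- `deg f Ω` is the degree of `f` on `Ω` with respect to `0`. -/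
  deg : (ℂ → ℂ) → Set ℂ → ℤ
  /-- A translation with its zero in the interior has degree one. -/
  normalization : ∀ (Ω : Set ℂ) (y : ℂ), IsCompact Ω → y ∈ interior Ω →
    deg (fun x => x - y) Ω = 1
  /-- The degree splits over compact pieces whose interiors contain all zeros. -/
  additivity : ∀ (f : ℂ → ℂ) (Ω Ω₁ Ω₂ : Set ℂ),
    Continuous f → IsCompact Ω → IsCompact Ω₁ → IsCompact Ω₂ →
    Ω₁ ⊆ Ω → Ω₂ ⊆ Ω → Disjoint (interior Ω₁) (interior Ω₂) →
    (∀ x ∈ Ω \ (interior Ω₁ ∪ interior Ω₂), f x ≠ 0) →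
    deg f Ω = deg f Ω₁ + deg f Ω₂
  /-- Homotopies without zeros on the frontier preserve the degree. -/
  homotopy_invariance : ∀ (H : ℝ → ℂ → ℂ) (Ω : Set ℂ),
    IsCompact Ω → Continuous (fun q : ℝ × ℂ => H q.1 q.2) →
    (∀ s ∈ Set.Icc (0 : ℝ) 1, ∀ x ∈ frontier Ω, H s x ≠ 0) →
    deg (H 0) Ω = deg (H 1) Ω

theorem preimage_interior_symm (s : Set ℂ) :
    interior (Complex.equivRealProdCLM.symm ⁻¹' s) =
      Complex.equivRealProdCLM.symm ⁻¹' interior s :=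
  (Complex.equivRealProdCLM.symm.toHomeomorph.preimage_interior s).symm

theorem preimage_frontier_symm (s : Set ℂ) :
    frontier (Complex.equivRealProdCLM.symm ⁻¹' s) =
      Complex.equivRealProdCLM.symm ⁻¹' frontier s :=
  (Complex.equivRealProdCLM.symm.toHomeomorph.preimage_frontier s).symm

/-- The degree theory on `ℂ` obtained by conjugating with the identification `ℂ ≃ ℝ × ℝ`. -/
noncomputable def PlaneDegree.ofBrouwer (D : BrouwerDegreeTheory) : PlaneDegree where
  deg f Ω := D.deg (fun x => Complex.equivRealProdCLM (f (Complex.equivRealProdCLM.symm x)))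
    (Complex.equivRealProdCLM.symm ⁻¹' Ω)
  normalization Ω y hΩ hy := by
    have h := D.normalization (Complex.equivRealProdCLM.symm ⁻¹' Ω) (Complex.equivRealProdCLM y)
      (Complex.equivRealProdCLM.symm.toHomeomorph.isCompact_preimage.mpr hΩ) (by
        rw [preimage_interior_symm, Set.mem_preimage, ContinuousLinearEquiv.symm_apply_apply]
        exact hy)
    rw [← h]
    congr 1
  additivity f Ω Ω₁ Ω₂ hf hΩ h₁ h₂ hs₁ hs₂ hd h0 := by
    have hc := fun {K : Set ℂ} (hK : IsCompact K) =>
      Complex.equivRealProdCLM.symm.toHomeomorph.isCompact_preimage.mpr hK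
    refine D.additivity _ _ _ _ (by fun_prop) (hc hΩ) (hc h₁) (hc h₂)
      (Set.preimage_mono hs₁) (Set.preimage_mono hs₂) ?_ ?_
    · rw [preimage_interior_symm, preimage_interior_symm]
      exact hd.preimage _
    · rw [preimage_interior_symm, preimage_interior_symm]
      intro x hx
      rw [Ne, map_eq_zero_iff _ Complex.equivRealProdCLM.injective]
      exact h0 _ hx
  homotopy_invariance H Ω hΩ hH h0 := by
    refine D.homotopy_invariance
      (fun s x => Complex.equivRealProdCLM (H s (Complex.equivRealProdCLM.symm x))) _
      (Complex.equivRealProdCLM.symm.toHomeomorph.isCompact_preimage.mpr hΩ) ?_ ?_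
    · have : Continuous (fun p : ℝ × (ℝ × ℝ) => (p.1, Complex.equivRealProdCLM.symm p.2)) := by
        fun_prop
      exact Complex.equivRealProdCLM.continuous.comp (hH.comp this)
    · rw [preimage_frontier_symm]
      intro s hs x hx
      rw [Ne, map_eq_zero_iff _ Complex.equivRealProdCLM.injective]
      exact h0 s hs _ hx

namespace PlaneDegree
variable (D : PlaneDegree)

theorem deg_empty {f : ℂ → ℂ} (hf : Continuous f) : D.deg f ∅ = 0 := by
  have := D.additivity f ∅ ∅ ∅ hf isCompact_empty isCompact_empty isCompact_empty
    (by simp) (by simp) (by simp) (by simp)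
  linarith

theorem deg_excise {f : ℂ → ℂ} {Ω B : Set ℂ} (hf : Continuous f) (hΩ : IsCompact Ω)
    (hB : IsCompact B) (hBΩ : B ⊆ Ω) (h0 : ∀ x ∈ Ω \ interior B, f x ≠ 0) :
    D.deg f Ω = D.deg f B := by
  have := D.additivity f Ω B ∅ hf hΩ hB isCompact_empty hBΩ (by simp) (by simp) (by simpa using h0)
  rw [this, D.deg_empty hf, add_zero]

theorem deg_eq_zero {f : ℂ → ℂ} {Ω : Set ℂ} (hf : Continuous f) (hΩ : IsCompact Ω)
    (h0 : ∀ x ∈ Ω, f x ≠ 0) : D.deg f Ω = 0 := by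
  rw [D.deg_excise hf hΩ isCompact_empty (by simp) (by simpa using h0), D.deg_empty hf]

theorem deg_segment {f g : ℂ → ℂ} {Ω : Set ℂ} (hf : Continuous f) (hg : Continuous g)
    (hΩ : IsCompact Ω)
    (h0 : ∀ s ∈ Set.Icc (0 : ℝ) 1, ∀ x ∈ frontier Ω, (1 - s : ℂ) * f x + s * g x ≠ 0) :
    D.deg f Ω = D.deg g Ω := by
  have := D.homotopy_invariance (fun s x => (1 - s : ℂ) * f x + s * g x) Ω hΩ (by fun_prop) h0
  simpa using this

/-- On a disk, a factor without zeros does not change the degree: shrinking the disk to its centre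
deforms `G` to the constant `G a`, and a path of exponentials deforms that constant to `1`. -/
theorem deg_mul {G p : ℂ → ℂ} {a : ℂ} {r : ℝ} (hr : 0 < r) (hG : Continuous G)
    (hp : Continuous p) (hG0 : ∀ z ∈ Metric.closedBall a r, G z ≠ 0)
    (hp0 : ∀ z ∈ Metric.sphere a r, p z ≠ 0) :
    D.deg (fun z => G z * p z) (Metric.closedBall a r) = D.deg p (Metric.closedBall a r) := by
  have hK := isCompact_closedBall a r
  have hfr : frontier (Metric.closedBall a r) = Metric.sphere a r := frontier_closedBall _ hr.ne'
  have h1 := D.homotopy_invariance (fun s z => G (a + (1 - s : ℂ) * (z - a)) * p z) _ hK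
    (by fun_prop) (by
      rw [hfr]
      intro s hs z hz
      refine mul_ne_zero (hG0 _ ?_) (hp0 z hz)
      rw [mem_closedBall_iff_norm, add_sub_cancel_left, norm_mul, mem_sphere_iff_norm.mp hz]
      have : ‖(1 - s : ℂ)‖ ≤ 1 := by
        rw [← Complex.ofReal_one, ← Complex.ofReal_sub, Complex.norm_of_nonneg (by linarith [hs.2])]
        linarith [hs.1]
      nlinarith)
  have hGa := hG0 a (Metric.mem_closedBall_self hr.le)
  have h2 := D.homotopy_invariance (fun s z => Complex.exp ((1 - s : ℂ) * Complex.log (G a)) * p z)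
    _ hK (by fun_prop) (by
      rw [hfr]
      intro s _ z hz
      exact mul_ne_zero (Complex.exp_ne_zero _) (hp0 z hz))
  simp only [Complex.ofReal_zero, Complex.ofReal_one, sub_zero, sub_self, zero_mul, one_mul,
    add_zero, Complex.exp_zero, Complex.exp_log hGa, add_sub_cancel] at h1 h2
  rw [h1, h2]

/-- If `p` and `q` vanish at most at the distinct points `a` and `c`, the degree of `p * q` is the
sum of the local contributions, because on a small disk around either point the other factor has
no zero. -/
theorem deg_split {p q : ℂ → ℂ} {a c : ℂ} {r : ℝ} (hp : Continuous p) (hq : Continuous q)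
    (hp0 : ∀ z, p z = 0 → z = a) (hq0 : ∀ z, q z = 0 → z = c) (hac : a ≠ c) (hr : ‖c - a‖ < r) :
    ∃ ρ > 0, D.deg (fun z => p z * q z) (Metric.closedBall a r) =
      D.deg p (Metric.closedBall a ρ) + D.deg q (Metric.closedBall c ρ) := by
  have hd : 0 < ‖c - a‖ := norm_pos_iff.mpr (sub_ne_zero.mpr hac.symm)
  set ρ := min (‖c - a‖ / 3) (r - ‖c - a‖) with hρ
  have hρ0 : 0 < ρ := lt_min (by linarith) (by linarith)
  have hρ1 : ρ ≤ ‖c - a‖ / 3 := min_le_left _ _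
  have hρ2 : ρ ≤ r - ‖c - a‖ := min_le_right _ _
  have hdist : dist a c = ‖c - a‖ := by rw [dist_comm, dist_eq_norm]
  have hia : interior (Metric.closedBall a ρ) = Metric.ball a ρ := interior_closedBall _ hρ0.ne'
  have hic : interior (Metric.closedBall c ρ) = Metric.ball c ρ := interior_closedBall _ hρ0.ne'
  have hdisj : Disjoint (Metric.closedBall a ρ) (Metric.closedBall c ρ) :=
    Metric.closedBall_disjoint_closedBall (by rw [hdist]; linarith)
  refine ⟨ρ, hρ0, ?_⟩
  rw [D.additivity (fun z => p z * q z) _ (Metric.closedBall a ρ) (Metric.closedBall c ρ) (hp.mul hq)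
    (isCompact_closedBall _ _) (isCompact_closedBall _ _) (isCompact_closedBall _ _)
    (Metric.closedBall_subset_closedBall (by linarith))
    (Metric.closedBall_subset_closedBall' (by rw [dist_comm, hdist]; linarith))
    (hdisj.mono interior_subset interior_subset) ?_]
  · congr 1
    · have := D.deg_mul (a := a) (G := q) (p := p) hρ0 hq hp (fun z hz h => ?_) (fun z hz h => ?_)
      · simpa only [mul_comm] using this
      · rw [hq0 z h] at hz
        exact Set.disjoint_left.mp hdisj hz (Metric.mem_closedBall_self hρ0.le)
      · rw [hp0 z h, mem_sphere_iff_norm, sub_self, norm_zero] at hz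
        exact hρ0.ne hz
    · refine D.deg_mul hρ0 hp hq (fun z hz h => ?_) (fun z hz h => ?_)
      · rw [hp0 z h] at hz
        exact Set.disjoint_left.mp hdisj (Metric.mem_closedBall_self hρ0.le) hz
      · rw [hq0 z h, mem_sphere_iff_norm, sub_self, norm_zero] at hz
        exact hρ0.ne hz
  · rw [hia, hic]
    intro z hz h
    refine hz.2 ?_
    rcases mul_eq_zero.mp h with h | h
    · rw [hp0 z h]; exact Or.inl (Metric.mem_ball_self hρ0)
    · rw [hq0 z h]; exact Or.inr (Metric.mem_ball_self hρ0)

theorem _root_.DegreeZero.IsModel.sub_ne {q : ℂ → ℂ} (hq : IsModel q) {z b : ℂ}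
    (h : q (z - b) = 0) : z = b := sub_eq_zero.mp (hq.eq_zero.mp h)

/-- The root of the factor `q (z - a)` may be moved from `a` to any other point of the open disk. -/
theorem deg_shift {p q : ℂ → ℂ} (hp : Continuous p) (hq : IsModel q) {a c : ℂ} {r : ℝ}
    (hp0 : ∀ z, p z = 0 → z = a) (hr : ‖c - a‖ < r) :
    D.deg (fun z => p z * q (z - a)) (Metric.closedBall a r) =
      D.deg (fun z => p z * q (z - c)) (Metric.closedBall a r) := by
  have hr0 : 0 < r := (norm_nonneg _).trans_lt hr
  have hqc := hq.continuous
  have := D.homotopy_invariance (fun s z => p z * q (z - (a + s * (c - a))))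
    (Metric.closedBall a r) (isCompact_closedBall _ _) (by fun_prop) (by
      rw [frontier_closedBall _ hr0.ne']
      intro s hs z hz
      rw [mem_sphere_iff_norm] at hz
      refine mul_ne_zero (fun h => ?_) (fun h => ?_)
      · rw [hp0 z h, sub_self, norm_zero] at hz
        exact hr0.ne hz
      · rw [hq.sub_ne h, add_sub_cancel_left, norm_mul, Complex.norm_of_nonneg hs.1] at hz
        have : s * ‖c - a‖ ≤ 1 * ‖c - a‖ := by gcongr; exact hs.2
        linarith)
  simpa using this

/-- The degree of the `n`-th power of a model map, by induction on `n`: one of the `n + 1`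
coinciding roots is moved away from the centre and contributes `δ` separately. -/
theorem deg_model_pow {q : ℂ → ℂ} (hq : IsModel q) {δ : ℤ}
    (hδ : ∀ (c : ℂ) (r : ℝ), 0 < r → D.deg (fun z => q (z - c)) (Metric.closedBall c r) = δ)
    (n : ℕ) : ∀ (a : ℂ) (r : ℝ), 0 < r →
      D.deg (fun z => q (z - a) ^ n) (Metric.closedBall a r) = n * δ := by
  have hqc := hq.continuous
  induction n with
  | zero =>
    intro a r _
    simpa using D.deg_eq_zero (f := fun _ => 1) continuous_const (isCompact_closedBall a r)
      (by simp)
  | succ n ih =>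
    intro a r hr
    have hc : ‖(a + (r / 2 : ℝ)) - a‖ = r / 2 := by
      rw [add_sub_cancel_left, Complex.norm_of_nonneg (by linarith)]
    have hpc : Continuous (fun z => q (z - a) ^ n) := by fun_prop
    have hp0 : ∀ z, q (z - a) ^ n = 0 → z = a := fun z h => hq.sub_ne (eq_zero_of_pow_eq_zero h)
    obtain ⟨ρ, hρ, hs⟩ := D.deg_split (q := fun z => q (z - (a + (r / 2 : ℝ)))) (r := r) hpc
      (by fun_prop) hp0 (fun z h => hq.sub_ne h) (fun h => by rw [← h] at hc; simp at hc; linarith)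
      (by rw [hc]; linarith)
    have hsh := D.deg_shift hpc hq (c := a + (r / 2 : ℝ)) (r := r) hp0 (by rw [hc]; linarith)
    simp only [pow_succ]
    rw [hsh, hs, ih a ρ hρ, hδ _ ρ hρ]
    push_cast
    ring

theorem deg_id (c : ℂ) {r : ℝ} (hr : 0 < r) :
    D.deg (fun z => z - c) (Metric.closedBall c r) = 1 :=
  D.normalization _ _ (isCompact_closedBall _ _) (by
    rw [interior_closedBall _ hr.ne']
    exact Metric.mem_ball_self hr)

/-- Complex conjugation has degree `-1`: the product of `z - a` and `conj (z - c)` has degree `0`,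
since moving `c` to `a` turns it into `‖z - a‖ ^ 2`, which is homotopic to `1` through maps
without zeros on the boundary circle. -/
theorem deg_conj (c : ℂ) {r : ℝ} (hr : 0 < r) :
    D.deg (fun z => (starRingEnd ℂ) (z - c)) (Metric.closedBall c r) = -1 := by
  have hq : IsModel (fun w => (starRingEnd ℂ) w) := Or.inr rfl
  set a : ℂ := c + 1 with ha
  have hca : ‖c - a‖ < 2 := by simp [ha]
  have hac : a ≠ c := by simp [ha]
  have hq0 : ∀ z b : ℂ, (starRingEnd ℂ) (z - b) = 0 → z = b := fun z b h => hq.sub_ne h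
  have hcc : ∀ b : ℂ, Continuous (fun z : ℂ => (starRingEnd ℂ) (z - b)) := fun b =>
    Complex.continuous_conj.comp (by fun_prop)
  have hpc : Continuous (fun z : ℂ => z - a) := by fun_prop
  obtain ⟨ρ, hρ, hs⟩ := D.deg_split (p := fun z => z - a) hpc (hcc c)
    (fun z h => sub_eq_zero.mp h) (fun z h => hq0 z c h) hac hca
  have hsh := D.deg_shift (p := fun z => z - a) hpc hq (fun z h => sub_eq_zero.mp h) hca
  have hone : D.deg (fun z => (z - a) * (starRingEnd ℂ) (z - a)) (Metric.closedBall a 2) =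
      D.deg (fun _ => 1) (Metric.closedBall a 2) := by
    refine D.deg_segment (hpc.mul (hcc a)) continuous_const (isCompact_closedBall _ _)
      fun s hs z hz => ?_
    rw [frontier_closedBall _ two_ne_zero, mem_sphere_iff_norm] at hz
    rw [Complex.mul_conj', hz]
    have : (0 : ℝ) < (1 - s) * 2 ^ 2 + s * 1 := by linarith [hs.1, hs.2]
    exact_mod_cast this.ne'
  rw [D.deg_eq_zero continuous_const (isCompact_closedBall _ _) (by simp)] at hone
  -- both balls excise to the smaller one
  have hrad : ∀ r₁ r₂ : ℝ, 0 < r₁ → r₁ ≤ r₂ →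
      D.deg (fun z => (starRingEnd ℂ) (z - c)) (Metric.closedBall c r₂) =
      D.deg (fun z => (starRingEnd ℂ) (z - c)) (Metric.closedBall c r₁) := fun r₁ r₂ h1 h12 => by
    refine D.deg_excise (hcc c) (isCompact_closedBall _ _) (isCompact_closedBall _ _)
      (Metric.closedBall_subset_closedBall h12) fun z hz h => hz.2 ?_
    rw [hq0 z c h, interior_closedBall _ h1.ne']
    exact Metric.mem_ball_self h1
  rw [hrad (min r ρ) r (lt_min hr hρ) (min_le_left _ _),
    ← hrad (min r ρ) ρ (lt_min hr hρ) (min_le_right _ _)]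
  rw [D.deg_id a hρ] at hs
  linarith

/-- The degree of a map which on `∂Ω` is a positive multiple of `G * q (z - a) ^ k`. The positive
factor `t` is arbitrary, and need not even be continuous, since a segment of maps removes it. -/
theorem deg_of_frontier {q : ℂ → ℂ} (hq : IsModel q) {δ : ℤ}
    (hδ : ∀ (c : ℂ) (r : ℝ), 0 < r → D.deg (fun z => q (z - c)) (Metric.closedBall c r) = δ)
    {Ω : Set ℂ} (hΩ : IsCompact Ω) {a : ℂ} (ha : a ∈ interior Ω) {f G : ℂ → ℂ}
    (hf : Continuous f) (hG : Continuous G) (hG0 : ∀ z ∈ Ω, G z ≠ 0) (k : ℕ) {t : ℂ → ℝ}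
    (ht : ∀ z ∈ frontier Ω, 0 < t z)
    (hfG : ∀ z ∈ frontier Ω, f z = t z * (G z * q (z - a) ^ k)) :
    D.deg f Ω = k * δ := by
  have hqc := hq.continuous
  have hgc : Continuous (fun z => G z * q (z - a) ^ k) := by fun_prop
  have hg0 : ∀ z ∈ Ω, z ≠ a → G z * q (z - a) ^ k ≠ 0 := fun z hz hza =>
    mul_ne_zero (hG0 z hz) (pow_ne_zero _ fun h => hza (hq.sub_ne h))
  have h1 : D.deg f Ω = D.deg (fun z => G z * q (z - a) ^ k) Ω := by
    refine D.deg_segment hf hgc hΩ fun s hs z hz => ?_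
    rw [hfG z hz, ← mul_assoc, ← add_mul]
    refine mul_ne_zero ?_ (hg0 z (hΩ.isClosed.frontier_subset hz) fun h => hz.2 (h ▸ ha))
    have : 0 < (1 - s) * t z + s := by
      rcases eq_or_lt_of_le hs.1 with h | h
      · rw [← h]; linarith [ht z hz]
      · have := mul_nonneg (sub_nonneg.mpr hs.2) (ht z hz).le
        linarith
    exact_mod_cast this.ne'
  obtain ⟨r, hr, hball⟩ := Metric.nhds_basis_closedBall.mem_iff.mp (mem_interior_iff_mem_nhds.mp ha)
  rw [h1, D.deg_excise hgc hΩ (isCompact_closedBall a r) hball fun z hz => hg0 z hz.1 fun h => hz.2 ?_,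
    D.deg_mul hr hG (by fun_prop) (fun z hz => hG0 z (hball hz)) (fun z hz h => ?_),
    D.deg_model_pow hq hδ k a r hr]
  · rw [hq.sub_ne (eq_zero_of_pow_eq_zero h), mem_sphere_iff_norm, sub_self, norm_zero] at hz
    exact hr.ne hz
  · rw [h, interior_closedBall _ hr.ne']
    exact Metric.mem_ball_self hr

/-- The exponent in a normal form is the degree. For a negative exponent `-k` one uses that
`(z - a) ^ (-k)` is a positive multiple of `conj (z - a) ^ k`. -/
theorem deg_normalForm {Ω : Set ℂ} (hΩ : IsCompact Ω) {a : ℂ} (ha : a ∈ interior Ω) {f G : ℂ → ℂ}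
    (hf : Continuous f) (hG : Continuous G) (hG0 : ∀ z ∈ Ω, G z ≠ 0) (n : ℤ)
    (hfG : ∀ z ∈ frontier Ω, f z = G z * (z - a) ^ n) : D.deg f Ω = n := by
  obtain ⟨k, rfl | rfl⟩ := n.eq_nat_or_neg
  · rw [D.deg_of_frontier (q := fun w => w) (Or.inl rfl) (fun c r hr => D.deg_id c hr) hΩ ha hf hG
      hG0 k (t := fun _ => 1) (fun _ _ => one_pos) fun z hz => ?_, mul_one]
    rw [hfG z hz, Complex.ofReal_one, one_mul, zpow_natCast]
  · rw [D.deg_of_frontier (q := fun w => (starRingEnd ℂ) w) (Or.inr rfl)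
      (fun c r hr => D.deg_conj c hr) hΩ ha hf hG
      hG0 k (t := fun z => ((‖z - a‖ ^ 2) ^ k)⁻¹) (fun z hz => ?_) fun z hz => ?_, mul_neg_one]
    · have := norm_pos_iff.mpr (sub_ne_zero_of_mem_frontier ha hz)
      positivity
    · have hne := sub_ne_zero_of_mem_frontier ha hz
      have hne' : (starRingEnd ℂ) (z - a) ≠ 0 := (map_ne_zero _).mpr hne
      rw [hfG z hz, zpow_neg, zpow_natCast]
      push_cast
      rw [← Complex.mul_conj', mul_pow]
      field_simp

end PlaneDegree

end DegreeZero

/-- Optimality of the degree test: if `f` is continuous on a compact `Ω ⊂ ℝ²`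
with connected interior, nonvanishing on `∂Ω`, and `deg(f, Ω, 0) = 0`, then
the restriction of `f` to `∂Ω` extends to a continuous map `g` on `Ω` with no
zero in `Ω`. -/
theorem degree_zero_extension (D : BrouwerDegreeTheory)
    (f : (ℝ × ℝ) → (ℝ × ℝ)) (Ω : Set (ℝ × ℝ))
    (hf : Continuous f) (hΩ : IsCompact Ω)
    (hconn : IsConnected (interior Ω))
    (hbd : ∀ t ∈ frontier Ω, f t ≠ 0)
    (hdeg : D.deg f Ω = 0) :
    ∃ g : (ℝ × ℝ) → (ℝ × ℝ), ContinuousOn g Ω ∧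
      (∀ t ∈ frontier Ω, g t = f t) ∧ (∀ t ∈ Ω, g t ≠ 0) := by
  set e := Complex.equivRealProdCLM with he
  set Ω' : Set ℂ := e ⁻¹' Ω with hΩ'
  set f' : ℂ → ℂ := fun z => e.symm (f (e z)) with hf'
  have hf'c : Continuous f' := by fun_prop
  have hΩ'c : IsCompact Ω' := e.toHomeomorph.isCompact_preimage.mpr hΩ
  have hint : interior Ω' = e ⁻¹' interior Ω := (e.toHomeomorph.preimage_interior Ω).symm
  have hfr : frontier Ω' = e ⁻¹' frontier Ω := (e.toHomeomorph.preimage_frontier Ω).symm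
  have hconn' : IsConnected (interior Ω') := by
    rw [hint, ← e.image_symm_eq_preimage]
    exact hconn.image _ e.symm.continuous.continuousOn
  obtain ⟨a, ha⟩ := hconn'.nonempty
  obtain ⟨n, G, hG, hG0, hfG⟩ := DegreeZero.normalForm_of_ne_zero hΩ'c hconn'.isPreconnected ha
    hf'c fun z hz => by
      rw [hfr] at hz
      simpa [hf'] using hbd _ hz
  have hn := (DegreeZero.PlaneDegree.ofBrouwer D).deg_normalForm hΩ'c ha hf'c hG hG0 n hfG
  have hdeg' : (DegreeZero.PlaneDegree.ofBrouwer D).deg f' Ω' = D.deg f Ω := by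
    change D.deg _ _ = _
    congr 1
  obtain rfl : n = 0 := by rw [← hn, hdeg', hdeg]
  refine ⟨fun x => e (G (e.symm x)), by fun_prop, fun t ht => ?_, fun t ht => ?_⟩
  · have := hfG (e.symm t) (by rw [hfr]; simpa using ht)
    rw [zpow_zero, mul_one] at this
    change e (G (e.symm t)) = f t
    rw [← this]
    simp [hf']
  · have := hG0 (e.symm t) (by simpa [hΩ'] using ht)
    simpa using this
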